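/- arXiv:1803.08839 — 3 statements merged into one kernel-verified Lean document; each statement's English description precedes it below -/
import Mathlib

section
/- Let G be a triangle-free simple graph on 6 vertices with at least 8 edges that contains a perfect matching (in fact, whose vertex set is covered by three disjoint edges). Then G is bipartite, and G is isomorphic to K_{3,3} or to K_{3,3} minus one edge. -/
open SimpleGraph

/-- `K_{3,3}` minus one edge. -/
noncomputable def K33minus : SimpleGraph (Fin 3 ⊕ Fin 3) :=
  (completeBipartiteGraph (Fin 3) (Fin 3)).deleteEdges {s(Sum.inl 0, Sum.inr 0)}

open Finset in
/-- If `G` has more than `5 / 4 * |V|` edges, every involution of the vertices pairs some two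
vertices of degree sum at least `6`. -/
theorem exists_six_le_degree_add_degree {V : Type*} [Fintype V] (G : SimpleGraph V)
    [DecidableRel G.Adj] (m : V → V) (hm : Function.Involutive m)
    (hE : 5 * Fintype.card V < 4 * G.edgeFinset.card) :
    ∃ v, 6 ≤ G.degree v + G.degree (m v) := by
  by_contra! h
  have h1 : ∑ v, (G.degree v + G.degree (m v)) ≤ ∑ _v : V, 5 :=
    sum_le_sum fun v _ => Nat.le_of_lt_succ (h v)
  have h2 : ∑ v, G.degree (m v) = ∑ v, G.degree v :=
    hm.toPerm.sum_comp univ (fun v => G.degree v) (by simp)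
  rw [sum_add_distrib, h2, G.sum_degrees_eq_twice_card_edges] at h1
  simp only [sum_const, card_univ, smul_eq_mul] at h1
  omega

theorem SimpleGraph.Subgraph.IsPerfectMatching.exists_involutive {V : Type*} {G : SimpleGraph V}
    {M : G.Subgraph} (hM : M.IsPerfectMatching) :
    ∃ m : V → V, Function.Involutive m ∧ ∀ v, G.Adj v (m v) := by
  have h := Subgraph.isPerfectMatching_iff.mp hM
  choose m hm hu using h
  exact ⟨m, fun v => (hu (m v) v (hm v).symm).symm, fun v => (hm v).adj_sub⟩

theorem SimpleGraph.CliqueFree.not_adj_of_adj_of_adj {V : Type*} {G : SimpleGraph V}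
    (htf : G.CliqueFree 3) {u : V} {x y : V} (hxy : G.Adj x y) (hx : G.Adj u x) :
    ¬ G.Adj u y := by
  classical
  exact fun hy => htf {u, x, y} (is3Clique_triple_iff.mpr ⟨hx, hy, hxy⟩)

open Finset in
/-- The neighbourhoods of adjacent vertices of large degree sum cover all vertices of a
triangle-free graph. -/
theorem SimpleGraph.CliqueFree.adj_or_adj_of_card_le_degree_add_degree {V : Type*} [Fintype V]
    {G : SimpleGraph V} [DecidableRel G.Adj] (htf : G.CliqueFree 3) {u v : V} (huv : G.Adj u v)
    (h : Fintype.card V ≤ G.degree u + G.degree v) (x : V) : G.Adj u x ∨ G.Adj v x := by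
  classical
  have hd : Disjoint (G.neighborFinset u) (G.neighborFinset v) := by
    rw [Finset.disjoint_left]
    intro y hu hv
    rw [mem_neighborFinset] at hu hv
    exact htf.not_adj_of_adj_of_adj hv huv hu
  have hc : G.neighborFinset u ∪ G.neighborFinset v = univ := by
    rw [← card_eq_iff_eq_univ]
    refine le_antisymm (card_le_univ _) ?_
    rwa [card_union_of_disjoint hd]
  have := mem_univ x
  rwa [← hc, mem_union, mem_neighborFinset, mem_neighborFinset] at this

theorem nonempty_iso_of_le_completeBipartiteGraph (H : SimpleGraph (Fin 3 ⊕ Fin 3))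
    (hle : H ≤ completeBipartiteGraph (Fin 3) (Fin 3)) (hE : 8 ≤ H.edgeSet.ncard) :
    Nonempty (H ≃g completeBipartiteGraph (Fin 3) (Fin 3)) ∨ Nonempty (H ≃g K33minus) := by
  classical
  set K := completeBipartiteGraph (Fin 3) (Fin 3) with hK
  by_cases hH : H = K
  · exact Or.inl ⟨hH ▸ Iso.refl⟩
  right
  obtain ⟨i, j, hij⟩ : ∃ i j, ¬ H.Adj (Sum.inl i) (Sum.inr j) := by
    by_contra! hall
    refine hH (le_antisymm hle ?_)
    rintro (i | i) (j | j) hadj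
    · simp [hK] at hadj
    · exact hall i j
    · exact (hall j i).symm
    · simp [hK] at hadj
  have hcard : K.edgeSet.ncard = 9 := by
    rw [Set.ncard, hK, encard_edgeSet_completeBipartiteGraph]
    simp
  have hset : H.edgeSet = K.edgeSet \ {s(Sum.inl i, Sum.inr j)} := by
    refine Set.eq_of_subset_of_ncard_le ?_ ?_
    · intro e he
      refine ⟨edgeSet_mono hle he, ?_⟩
      rintro rfl
      exact hij he
    · rw [Set.ncard_sdiff_singleton_of_mem (by simp [hK]), hcard]
      exact hE
  have hHK : H = K.deleteEdges {s(Sum.inl i, Sum.inr j)} := by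
    rw [← edgeSet_inj, hset, edgeSet_deleteEdges]
  refine ⟨⟨Equiv.sumCongr (Equiv.swap i 0) (Equiv.swap j 0), ?_⟩⟩
  have hi (x : Fin 3) : Equiv.swap i 0 x = 0 ↔ x = i := by
    rw [Equiv.swap_apply_eq_iff, Equiv.swap_apply_right]
  have hj (x : Fin 3) : Equiv.swap j 0 x = 0 ↔ x = j := by
    rw [Equiv.swap_apply_eq_iff, Equiv.swap_apply_right]
  rw [hHK]
  rintro (x | x) (y | y) <;> simp [K33minus, hK, deleteEdges_adj, hi, hj]

theorem stmt_7 (G : SimpleGraph (Fin 6)) [DecidableRel G.Adj] (htf : G.CliqueFree 3)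
    (hE : 8 ≤ G.edgeFinset.card)
    (hM : ∃ M : G.Subgraph, M.IsPerfectMatching) :
    G.Colorable 2 ∧
      (Nonempty (G ≃g completeBipartiteGraph (Fin 3) (Fin 3)) ∨
        Nonempty (G ≃g K33minus)) := by
  obtain ⟨M, hM⟩ := hM
  obtain ⟨m, hm, hadj⟩ := hM.exists_involutive
  obtain ⟨u, hu⟩ := exists_six_le_degree_add_degree G m hm (by simp; omega)
  have hcover := htf.adj_or_adj_of_card_le_degree_add_degree (hadj u) (by simpa using hu)
  have hbip {x y : Fin 6} (hxy : G.Adj x y) : G.Adj u x ↔ ¬ G.Adj u y := by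
    refine ⟨htf.not_adj_of_adj_of_adj hxy, fun hy => (hcover x).resolve_right fun hx => ?_⟩
    exact htf.not_adj_of_adj_of_adj hxy hx ((hcover y).resolve_left hy)
  refine ⟨(Coloring.mk (fun x => decide (G.Adj u x)) fun {x y} hxy => ?_ :
    G.Coloring Bool).colorable, ?_⟩
  · have := hbip hxy
    simp only [ne_eq, decide_eq_decide]
    tauto
  have hsub : {x // G.Adj u x} ≃ {x // ¬ G.Adj u x} :=
    hm.toPerm.subtypeEquiv fun x => hbip (hadj x)
  have hsum := Fintype.card_congr (Equiv.sumCompl (G.Adj u))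
  rw [Fintype.card_sum, ← Fintype.card_congr hsub, Fintype.card_fin] at hsum
  have e₁ : {x // G.Adj u x} ≃ Fin 3 := Fintype.equivFinOfCardEq (by omega)
  let e := (Equiv.sumCompl (G.Adj u)).symm.trans (Equiv.sumCongr e₁ (hsub.symm.trans e₁))
  have he (x : Fin 6) : (e x).isLeft ↔ G.Adj u x := by
    by_cases hx : G.Adj u x <;> simp [e, hx]
  let f : G ≃g G.map e.toEmbedding := Iso.map e G
  have hle : G.map e.toEmbedding ≤ completeBipartiteGraph (Fin 3) (Fin 3) := by
    rintro _ _ ⟨-, x, y, hxy, rfl, rfl⟩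
    have := hbip hxy
    simp only [completeBipartiteGraph_adj, Equiv.coe_toEmbedding, ← Sum.not_isLeft, he]
    tauto
  have hcard : 8 ≤ (G.map e.toEmbedding).edgeSet.ncard := by
    rw [← Nat.card_coe_set_eq, ← Nat.card_congr f.mapEdgeSet, Nat.card_coe_set_eq,
      ← coe_edgeFinset, Set.ncard_coe_finset]
    exact hE
  exact (nonempty_iso_of_le_completeBipartiteGraph _ hle hcard).imp
    (fun ⟨g⟩ => ⟨f.trans g⟩) (fun ⟨g⟩ => ⟨f.trans g⟩)
end

section
/- The graph K_{3,3} minus one edge is collapsible. -/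
open SimpleGraph

/-- A finite simple graph is collapsible if for every even-cardinality set `R` of vertices,
it has a spanning connected subgraph whose set of odd-degree vertices is exactly `R`. -/
def Collapsible {V : Type*} [Fintype V] (G : SimpleGraph V) : Prop :=
  ∀ R : Finset V, Even R.card →
    ∃ F : SimpleGraph V, F ≤ G ∧ F.Connected ∧
      ∀ v : V, (Odd ((F.neighborSet v).ncard) ↔ v ∈ R)

/-- The bipartite graph on `α ⊕ β` whose edges are given by a relation `e` from `α` to `β`. -/
def bipartiteGraphOf {α β : Type*} (e : α → β → Prop) : SimpleGraph (α ⊕ β) where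
  Adj
    | .inl i, .inr j => e i j
    | .inr j, .inl i => e i j
    | _, _ => False
  symm := ⟨by rintro (i | i) (j | j) h <;> exact h⟩
  loopless := ⟨by rintro (i | i) h <;> exact h⟩

theorem ncard_neighborSet_bipartiteGraphOf_inl {α β : Type*} (e : α → β → Prop) (i : α) :
    ((bipartiteGraphOf e).neighborSet (.inl i)).ncard = {j | e i j}.ncard := by
  rw [← Set.ncard_image_of_injective {j | e i j} (Sum.inr_injective (α := α))]
  congr 1
  ext (k | k) <;> simp [bipartiteGraphOf]

theorem ncard_neighborSet_bipartiteGraphOf_inr {α β : Type*} (e : α → β → Prop) (j : β) :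
    ((bipartiteGraphOf e).neighborSet (.inr j)).ncard = {i | e i j}.ncard := by
  rw [← Set.ncard_image_of_injective {i | e i j} (Sum.inl_injective (β := β))]
  congr 1
  ext (k | k) <;> simp [bipartiteGraphOf]

/-- A bipartite graph is connected if some left vertex shares a neighbor with every left vertex
and every right vertex has a neighbor. -/
theorem bipartiteGraphOf_connected {α β : Type*} {e : α → β → Prop} (k : α)
    (hk : ∀ i, ∃ j, e i j ∧ e k j) (hr : ∀ j, ∃ i, e i j) : (bipartiteGraphOf e).Connected := by
  have hadj {i : α} {j : β} (h : e i j) : (bipartiteGraphOf e).Adj (.inl i) (.inr j) := h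
  have hleft (i : α) : (bipartiteGraphOf e).Reachable (.inl k) (.inl i) := by
    obtain ⟨j, hij, hkj⟩ := hk i
    exact (hadj hkj).reachable.trans (hadj hij).symm.reachable
  refine connected_iff_exists_forall_reachable _ |>.2 ⟨.inl k, ?_⟩
  rintro (i | j)
  · exact hleft i
  · obtain ⟨i, hij⟩ := hr j
    exact (hleft i).trans (hadj hij).reachable

theorem odd_ncard_fin_three (p : Fin 3 → Bool) :
    Odd {i | p i = true}.ncard ↔ (p 0 ^^ p 1 ^^ p 2) = true := by
  have h : {i | p i = true}.ncard = (Finset.univ.filter fun i => p i = true).card := by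
    rw [← Set.ncard_coe_finset]
    simp
  rw [h, Finset.card_filter, Fin.sum_univ_three]
  cases p 0 <;> cases p 1 <;> cases p 2 <;> decide

theorem even_card_fin_three_sum_fin_three (R : Finset (Fin 3 ⊕ Fin 3)) :
    Even R.card ↔ (decide (.inl 0 ∈ R) ^^ decide (.inl 1 ∈ R) ^^ decide (.inl 2 ∈ R)) =
      (decide (.inr 0 ∈ R) ^^ decide (.inr 1 ∈ R) ^^ decide (.inr 2 ∈ R)) := by
  have h : R.card = ∑ v, if decide (v ∈ R) = true then 1 else 0 := by simp
  rw [h, Fintype.sum_sum_type, Fin.sum_univ_three, Fin.sum_univ_three]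
  generalize decide (Sum.inl 0 ∈ R) = r₀, decide (Sum.inl 1 ∈ R) = r₁,
    decide (Sum.inl 2 ∈ R) = r₂, decide (Sum.inr 0 ∈ R) = c₀,
    decide (Sum.inr 1 ∈ R) = c₁, decide (Sum.inr 2 ∈ R) = c₂
  revert r₀ r₁ r₂ c₀ c₁ c₂
  decide

/-- The Boolean `3 × 3` matrix with vanishing corner entry, row parities `r`, column parities `c`
and free entries `a`, `b`, `d`. The parity of the last row is determined by the others. -/
def matrixOfParities (r c : Fin 3 → Bool) (a b d : Bool) : Fin 3 → Fin 3 → Bool :=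
  ![![false, a, r 0 ^^ a],
    ![r 1 ^^ b ^^ d, b, d],
    ![c 0 ^^ r 1 ^^ b ^^ d, c 1 ^^ a ^^ b, c 2 ^^ r 0 ^^ a ^^ d]]

theorem matrixOfParities_row {r c : Fin 3 → Bool} (h : (r 0 ^^ r 1 ^^ r 2) = (c 0 ^^ c 1 ^^ c 2))
    (a b d : Bool) (i : Fin 3) :
    (matrixOfParities r c a b d i 0 ^^ matrixOfParities r c a b d i 1 ^^
      matrixOfParities r c a b d i 2) = r i := by
  revert h i
  simp only [Fin.forall_fin_succ, Fin.succ_zero_eq_one, Fin.succ_one_eq_two, IsEmpty.forall_iff,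
    and_true, matrixOfParities]
  generalize r 0 = r₀, r 1 = r₁, r 2 = r₂, c 0 = c₀, c 1 = c₁, c 2 = c₂
  revert r₀ r₁ r₂ c₀ c₁ c₂ a b d
  decide

theorem matrixOfParities_col (r c : Fin 3 → Bool) (a b d : Bool) (j : Fin 3) :
    (matrixOfParities r c a b d 0 j ^^ matrixOfParities r c a b d 1 j ^^
      matrixOfParities r c a b d 2 j) = c j := by
  revert j
  simp only [Fin.forall_fin_succ, Fin.succ_zero_eq_one, Fin.succ_one_eq_two, IsEmpty.forall_iff,
    and_true, matrixOfParities]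
  generalize r 0 = r₀, r 1 = r₁, c 0 = c₀, c 1 = c₁, c 2 = c₂
  revert r₀ r₁ c₀ c₁ c₂ a b d
  decide

theorem exists_connected_matrixOfParities (r c : Fin 3 → Bool) :
    ∃ a b d, (∃ k, ∀ i, ∃ j, matrixOfParities r c a b d i j = true ∧
        matrixOfParities r c a b d k j = true) ∧
      ∀ j, ∃ i, matrixOfParities r c a b d i j = true := by
  unfold matrixOfParities
  generalize r 0 = r₀, r 1 = r₁, c 0 = c₀, c 1 = c₁, c 2 = c₂
  revert r₀ r₁ c₀ c₁ c₂
  decide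

theorem stmt_10 : Collapsible K33minus := by
  intro R hR
  rw [even_card_fin_three_sum_fin_three] at hR
  let r : Fin 3 → Bool := fun i => decide (.inl i ∈ R)
  let c : Fin 3 → Bool := fun j => decide (.inr j ∈ R)
  obtain ⟨a, b, d, ⟨k, hk⟩, hr⟩ := exists_connected_matrixOfParities r c
  refine ⟨bipartiteGraphOf fun i j => matrixOfParities r c a b d i j = true, ?_,
    bipartiteGraphOf_connected k hk hr, ?_⟩
  · rintro (i | i) (j | j) h
    · exact h.elim
    · have hne : ¬(i = 0 ∧ j = 0) := by
        rintro ⟨rfl, rfl⟩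
        exact Bool.false_ne_true h
      simpa [K33minus] using hne
    · have hne : ¬(i = 0 ∧ j = 0) := by
        rintro ⟨rfl, rfl⟩
        exact Bool.false_ne_true h
      simpa [K33minus] using hne
    · exact h.elim
  · rintro (i | j)
    · rw [ncard_neighborSet_bipartiteGraphOf_inl, odd_ncard_fin_three,
        matrixOfParities_row (r := r) (c := c) hR, decide_eq_true_iff]
    · rw [ncard_neighborSet_bipartiteGraphOf_inr,
        odd_ncard_fin_three fun i => matrixOfParities r c a b d i j,
        matrixOfParities_col, decide_eq_true_iff]
end

section
/- Let H be an essentially 2-edge-connected graph and let xy be an edge of H with deg(x) ≥ 2 and deg(y) ≥ 2, such that the graph H − {x,y} has at most 2 edges. Then H has a dominating closed trail containing both x and y. -/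
open SimpleGraph

/-- A trail whose edges all meet `S`, which stays in `S ∪ {x, y}` and dominates every edge
inside `S`. -/
structure IsLink {V : Type*} (G : SimpleGraph V) (x y : V) (S : Set V) {u v : V}
    (w : G.Walk u v) : Prop where
  isTrail : w.IsTrail
  edges_meet : ∀ e ∈ w.edges, ∃ z ∈ S, z ∈ e
  support_subset : ∀ z ∈ w.support, z ∈ S ∨ z = x ∨ z = y
  dominates : ∀ p ∈ S, ∀ q ∈ S, G.Adj p q → p ∈ w.support ∨ q ∈ w.support

/-- A union of components of `G - {x, y}` carrying a link between vertices of `{x, y}`, with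
distinct ends if the set has neighbours of both `x` and `y`. -/
structure IsLinkedRegion {V : Type*} (G : SimpleGraph V) (x y : V) (S : Set V) : Prop where
  left_notMem : x ∉ S
  right_notMem : y ∉ S
  closed : ∀ s ∈ S, ∀ t, G.Adj s t → t ∈ S ∨ t = x ∨ t = y
  exists_link : ∃ u v : V, (u = x ∨ u = y) ∧ (v = x ∨ v = y) ∧
    (∃ w : G.Walk u v, IsLink G x y S w) ∧
    ((∃ p ∈ S, G.Adj p x) → (∃ p ∈ S, G.Adj p y) → u ≠ v)

/-- There is a link for `U` starting at `x`, ending in `{x, y}` and visiting `y`. -/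
def HasSpanningLink {V : Type*} (G : SimpleGraph V) (x y : V) (U : Set V) : Prop :=
  x ∉ U ∧ y ∉ U ∧ ∃ t, (t = x ∨ t = y) ∧ ∃ w : G.Walk x t, IsLink G x y U w ∧ y ∈ w.support

section

variable {V : Type*} {G : SimpleGraph V} {x y : V}

theorem IsLink.reverse {S : Set V} {u v : V} {w : G.Walk u v} (h : IsLink G x y S w) :
    IsLink G x y S w.reverse where
  isTrail := h.isTrail.reverse w
  edges_meet e he := h.edges_meet e (by simpa using he)
  support_subset z hz := h.support_subset z (by simpa using hz)
  dominates p hp q hq hpq := by simpa using h.dominates p hp q hq hpq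

theorem IsLinkedRegion.hasSpanningLink {S : Set V} (h : IsLinkedRegion G x y S)
    (hx : ∃ p ∈ S, G.Adj p x) (hy : ∃ p ∈ S, G.Adj p y) : HasSpanningLink G x y S := by
  obtain ⟨u, v, hu, hv, ⟨w, hw⟩, hne⟩ := h.exists_link
  have huv := hne hx hy
  refine ⟨h.left_notMem, h.right_notMem, y, Or.inr rfl, ?_⟩
  rcases hu with rfl | rfl <;> rcases hv with rfl | rfl
  · exact absurd rfl huv
  · exact ⟨w, hw, w.end_mem_support⟩
  · exact ⟨w.reverse, hw.reverse, w.reverse.end_mem_support⟩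
  · exact absurd rfl huv

theorem IsLink.edges_disjoint {U S : Set V} {u v u' v' : V} {w : G.Walk u v}
    {l : G.Walk u' v'} (hw : IsLink G x y U w) (hl : IsLink G x y S l)
    (hxS : x ∉ S) (hyS : y ∉ S) (hd : Disjoint U S) : w.edges.Disjoint l.edges := by
  intro e he he'
  obtain ⟨z, hz, -⟩ := hw.edges_meet e he
  obtain ⟨z', hz', hze'⟩ := hl.edges_meet e he'
  rcases hw.support_subset z' (w.mem_support_of_mem_edges he hze') with h | rfl | rfl
  · exact Set.disjoint_left.mp hd h hz'
  · exact hxS hz'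
  · exact hyS hz'

theorem isLink_union {U S : Set V} {u v u' v' u'' v'' : V} {w : G.Walk u v}
    {l : G.Walk u' v'} {m : G.Walk u'' v''} (hw : IsLink G x y U w) (hl : IsLink G x y S l)
    (hxU : x ∉ U) (hyU : y ∉ U) (hd : Disjoint U S)
    (hclosed : ∀ s ∈ S, ∀ t, G.Adj s t → t ∈ S ∨ t = x ∨ t = y)
    (hm : m.IsTrail) (he : ∀ e, e ∈ m.edges → e ∈ w.edges ∨ e ∈ l.edges)
    (hs : ∀ z, z ∈ m.support ↔ z ∈ w.support ∨ z ∈ l.support) :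
    IsLink G x y (U ∪ S) m where
  isTrail := hm
  edges_meet e h := by
    rcases he e h with h | h
    · obtain ⟨z, hz, hze⟩ := hw.edges_meet e h
      exact ⟨z, Or.inl hz, hze⟩
    · obtain ⟨z, hz, hze⟩ := hl.edges_meet e h
      exact ⟨z, Or.inr hz, hze⟩
  support_subset z hz := by
    rcases (hs z).1 hz with h | h
    · exact (hw.support_subset z h).imp_left Or.inl
    · exact (hl.support_subset z h).imp_left Or.inr
  dominates p hp q hq hpq := by
    have key : ∀ p ∈ S, ∀ q ∈ U, ¬ G.Adj p q := by
      intro p hp q hq hpq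
      rcases hclosed p hp q hpq with h | rfl | rfl
      · exact Set.disjoint_left.mp hd hq h
      · exact hxU hq
      · exact hyU hq
    simp only [hs]
    rcases hp with hp | hp <;> rcases hq with hq | hq
    · have := hw.dominates p hp q hq hpq
      tauto
    · exact absurd hpq.symm (key q hq p hp)
    · exact absurd hpq (key p hp q hq)
    · have := hl.dominates p hp q hq hpq
      tauto

theorem HasSpanningLink.union {U S : Set V} (hU : HasSpanningLink G x y U)
    (hS : IsLinkedRegion G x y S) (hd : Disjoint U S) : HasSpanningLink G x y (U ∪ S) := by
  classical
  obtain ⟨hxU, hyU, t, ht, w, hw, hyw⟩ := hU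
  obtain ⟨u, v, hu, hv, ⟨l, hl⟩, -⟩ := hS.exists_link
  refine ⟨fun h => h.elim hxU hS.left_notMem, fun h => h.elim hyU hS.right_notMem, ?_⟩
  have hdis := hw.edges_disjoint hl hS.left_notMem hS.right_notMem hd
  by_cases huv : u = v
  · subst huv
    have huw : u ∈ w.support := by
      rcases hu with rfl | rfl
      · exact w.start_mem_support
      · exact hyw
    have hspec := w.take_spec huw
    have hsup : ∀ z, z ∈ w.support ↔
        z ∈ (w.takeUntil u huw).support ∨ z ∈ (w.dropUntil u huw).support := by
      intro z
      rw [← Walk.mem_support_append_iff, hspec]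
    have hedg : w.edges = (w.takeUntil u huw).edges ++ (w.dropUntil u huw).edges := by
      rw [← Walk.edges_append, hspec]
    refine ⟨t, ht, ((w.takeUntil u huw).append l).append (w.dropUntil u huw), ?_, ?_⟩
    · refine isLink_union hw hl hxU hyU hd hS.closed ?_ ?_ ?_
      · have h1 := hw.isTrail.edges_nodup
        have h2 := hl.isTrail.edges_nodup
        rw [hedg] at h1 hdis
        rw [Walk.isTrail_def]
        simp only [Walk.edges_append, List.nodup_append', List.disjoint_append_left] at *
        exact ⟨⟨h1.1, h2, hdis.1⟩, h1.2.1, h1.2.2, hdis.2.symm⟩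
      · intro e
        rw [hedg]
        simp only [Walk.edges_append, List.mem_append]
        tauto
      · intro z
        rw [hsup]
        simp only [Walk.mem_support_append_iff]
        tauto
    · have := (hsup y).1 hyw
      simp only [Walk.mem_support_append_iff]
      tauto
  · have : ∃ v', (v' = x ∨ v' = y) ∧ ∃ l : G.Walk t v', IsLink G x y S l := by
      by_cases h : u = t
      · subst h
        exact ⟨v, hv, l, hl⟩
      · obtain rfl : v = t := by grind
        exact ⟨u, hu, l.reverse, hl.reverse⟩
    obtain ⟨v', hv', l, hl⟩ := this
    have hdis := hw.edges_disjoint hl hS.left_notMem hS.right_notMem hd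
    refine ⟨v', hv', w.append l, isLink_union hw hl hxU hyU hd hS.closed ?_ ?_ ?_, ?_⟩
    · rw [Walk.isTrail_def, Walk.edges_append, List.nodup_append']
      exact ⟨hw.isTrail.edges_nodup, hl.isTrail.edges_nodup, hdis⟩
    · intro e
      simp [Walk.edges_append]
    · intro z
      rw [Walk.mem_support_append_iff]
    · rw [Walk.mem_support_append_iff]
      exact Or.inl hyw

theorem HasSpanningLink.exists_dominating_closed_trail {U : Set V}
    (hU : HasSpanningLink G x y U) (hxy : G.Adj x y)
    (hcover : ∀ p q, G.Adj p q → p = x ∨ p = y ∨ q = x ∨ q = y ∨ p ∈ U ∧ q ∈ U) :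
    ∃ (t0 : V) (t : G.Walk t0 t0), t.IsTrail ∧
      (∀ e ∈ G.edgeSet, ∃ z : V, z ∈ e ∧ z ∈ t.support) ∧
      x ∈ t.support ∧ y ∈ t.support := by
  obtain ⟨hxU, hyU, t, ht, w, hw, hyw⟩ := hU
  have hc : ∃ c : G.Walk x x, c.IsTrail ∧ ∀ z ∈ w.support, z ∈ c.support := by
    rcases ht with rfl | rfl
    · exact ⟨w, hw.isTrail, fun z hz => hz⟩
    · refine ⟨w.concat hxy.symm, ?_, fun z hz => ?_⟩
      · rw [Walk.isTrail_def, Walk.edges_concat, List.concat_eq_append, List.nodup_append']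
        refine ⟨hw.isTrail.edges_nodup, by simp, ?_⟩
        rw [List.disjoint_singleton]
        intro h
        obtain ⟨z, hz, hze⟩ := hw.edges_meet _ h
        grind
      · simp [Walk.support_concat, hz]
  obtain ⟨c, hc, hs⟩ := hc
  have hx := hs x w.start_mem_support
  have hy := hs y hyw
  refine ⟨x, c, hc, ?_, hx, hy⟩
  intro e
  induction e with | _ p q
  intro hpq
  rw [mem_edgeSet] at hpq
  rcases hcover p q hpq with rfl | rfl | rfl | rfl | ⟨hp, hq⟩
  · exact ⟨_, Sym2.mem_mk_left _ _, hx⟩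
  · exact ⟨_, Sym2.mem_mk_left _ _, hy⟩
  · exact ⟨_, Sym2.mem_mk_right _ _, hx⟩
  · exact ⟨_, Sym2.mem_mk_right _ _, hy⟩
  · rcases hw.dominates p hp q hq hpq with h | h
    · exact ⟨_, Sym2.mem_mk_left _ _, hs _ h⟩
    · exact ⟨_, Sym2.mem_mk_right _ _, hs _ h⟩

theorem exists_isLink_of_isTrail {S : Set V} {s₁ s₂ t₁ t₂ : V} (q : G.Walk s₁ s₂)
    (hq : q.IsTrail) (hqS : ∀ z ∈ q.support, z ∈ S)
    (hdom : ∀ p ∈ S, ∀ r ∈ S, G.Adj p r → p ∈ q.support ∨ r ∈ q.support)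
    (hx : x ∉ S) (hy : y ∉ S) (ht₁ : t₁ = x ∨ t₁ = y) (ht₂ : t₂ = x ∨ t₂ = y)
    (h₁ : G.Adj s₁ t₁) (h₂ : G.Adj s₂ t₂) (hne : s₁ = s₂ → t₁ ≠ t₂) :
    ∃ w : G.Walk t₁ t₂, IsLink G x y S w := by
  have hs₁ := hqS _ q.start_mem_support
  have hs₂ := hqS _ q.end_mem_support
  have hT₁ : t₁ ∉ S := by rcases ht₁ with rfl | rfl <;> assumption
  have hT₂ : t₂ ∉ S := by rcases ht₂ with rfl | rfl <;> assumption
  have hqe : ∀ e ∈ q.edges, ∀ z ∈ e, z ∈ S := fun e he z hz =>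
    hqS z (q.mem_support_of_mem_edges he hz)
  refine ⟨Walk.cons h₁.symm (q.concat h₂), ⟨?_, ?_, ?_, ?_⟩⟩
  · rw [Walk.isTrail_cons, Walk.isTrail_def, Walk.edges_concat, List.concat_eq_append,
      List.nodup_append']
    refine ⟨⟨hq.edges_nodup, by simp, ?_⟩, ?_⟩
    · rw [List.disjoint_singleton]
      exact fun h => hT₂ (hqe _ h t₂ (by simp))
    · intro h
      rcases List.mem_append.1 h with h | h
      · exact hT₁ (hqe _ h t₁ (by simp))
      · rw [List.mem_singleton, Sym2.eq_iff] at h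
        grind
  · intro e he
    rw [Walk.edges_cons, Walk.edges_concat] at he
    simp only [List.concat_eq_append, List.mem_cons, List.mem_append, List.not_mem_nil,
      or_false] at he
    rcases he with rfl | he | rfl
    · exact ⟨s₁, hs₁, by simp⟩
    · induction e with | _ p r
      exact ⟨p, hqe _ he p (by simp), by simp⟩
    · exact ⟨s₂, hs₂, by simp⟩
  · intro z hz
    rw [Walk.support_cons, Walk.support_concat] at hz
    simp only [List.mem_cons, List.mem_append, List.not_mem_nil, or_false] at hz
    grind
  · intro p hp r hr hpr
    have := hdom p hp r hr hpr
    simp only [Walk.support_cons, Walk.support_concat, List.mem_cons, List.mem_append]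
    tauto

/-- A closed set is a linked region if it contains a dominating trail whose ends are attached to
`{x, y}` by two distinct edges, reaching both of `x` and `y` whenever the set has neighbours of
both. -/
theorem IsLinkedRegion.of_attachments {S : Set V} {s₁ s₂ t₁ t₂ : V}
    (hx : x ∉ S) (hy : y ∉ S)
    (hclosed : ∀ s ∈ S, ∀ t, G.Adj s t → t ∈ S ∨ t = x ∨ t = y) (q : G.Walk s₁ s₂)
    (hq : q.IsTrail) (hqS : ∀ z ∈ q.support, z ∈ S)
    (hdom : ∀ p ∈ S, ∀ r ∈ S, G.Adj p r → p ∈ q.support ∨ r ∈ q.support)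
    (ht₁ : t₁ = x ∨ t₁ = y) (ht₂ : t₂ = x ∨ t₂ = y)
    (h₁ : G.Adj s₁ t₁) (h₂ : G.Adj s₂ t₂) (hne : s₁ = s₂ → t₁ ≠ t₂)
    (hboth : (∃ p ∈ S, G.Adj p x) → (∃ p ∈ S, G.Adj p y) → t₁ ≠ t₂) :
    IsLinkedRegion G x y S where
  left_notMem := hx
  right_notMem := hy
  closed := hclosed
  exists_link := ⟨t₁, t₂, ht₁, ht₂,
    exists_isLink_of_isTrail q hq hqS hdom hx hy ht₁ ht₂ h₁ h₂ hne, hboth⟩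

theorem isLinkedRegion_empty : IsLinkedRegion G x y ∅ where
  left_notMem := by simp
  right_notMem := by simp
  closed := by simp
  exists_link := ⟨x, x, Or.inl rfl, Or.inl rfl,
    ⟨Walk.nil, ⟨Walk.IsTrail.nil, by simp, by simp, by simp⟩⟩, by simp⟩

theorem isLinkedRegion_singleton {u : V} (hxy : x ≠ y) (hux : G.Adj u x) (huy : G.Adj u y)
    (hclosed : ∀ t, G.Adj u t → t = x ∨ t = y) : IsLinkedRegion G x y {u} := by
  refine IsLinkedRegion.of_attachments (fun h => hux.ne' h) (fun h => huy.ne' h) ?_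
    (Walk.nil : G.Walk u u) Walk.IsTrail.nil (by simp) ?_ (Or.inl rfl) (Or.inr rfl) hux huy
    (fun _ => hxy) (fun _ _ => hxy)
  · rintro s rfl t ht
    exact Or.inr (hclosed t ht)
  · simp

theorem exists_crossing_adj
    (hess : ∀ e ∈ G.edgeSet, ∀ a b c d : V,
      (G.deleteEdges {e}).Adj a b → (G.deleteEdges {e}).Adj c d →
      (G.deleteEdges {e}).Reachable a c)
    {e : Sym2 V} (he : e ∈ G.edgeSet) (S : Set V) {a b c d : V} (hab : G.Adj a b)
    (hcd : G.Adj c d) (hab' : s(a, b) ≠ e) (hcd' : s(c, d) ≠ e) (ha : a ∈ S) (hc : c ∉ S) :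
    ∃ s ∈ S, ∃ t ∉ S, G.Adj s t ∧ s(s, t) ≠ e := by
  obtain ⟨w⟩ := hess e he a b c d (by simp [deleteEdges_adj, hab, hab'])
    (by simp [deleteEdges_adj, hcd, hcd'])
  obtain ⟨δ, -, h₁, h₂⟩ := w.exists_boundary_dart S ha hc
  have := δ.adj
  rw [deleteEdges_adj] at this
  exact ⟨_, h₁, _, h₂, this.1, by simpa using this.2⟩

/-- A closed set containing an edge has two distinct attachment edges, reaching both of `x` and
`y` whenever the set has neighbours of both. -/
theorem exists_two_attachments (hconn : G.Connected)
    (hess : ∀ e ∈ G.edgeSet, ∀ a b c d : V,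
      (G.deleteEdges {e}).Adj a b → (G.deleteEdges {e}).Adj c d →
      (G.deleteEdges {e}).Reachable a c)
    (hxy : G.Adj x y) {S : Set V} (hx : x ∉ S) (hy : y ∉ S)
    (hclosed : ∀ s ∈ S, ∀ t, G.Adj s t → t ∈ S ∨ t = x ∨ t = y)
    {a b : V} (ha : a ∈ S) (hb : b ∈ S) (hab : G.Adj a b) :
    ∃ s₁ ∈ S, ∃ s₂ ∈ S, ∃ t₁ t₂, (t₁ = x ∨ t₁ = y) ∧ (t₂ = x ∨ t₂ = y) ∧
      G.Adj s₁ t₁ ∧ G.Adj s₂ t₂ ∧ (s₁ = s₂ → t₁ ≠ t₂) ∧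
      ((∃ p ∈ S, G.Adj p x) → (∃ p ∈ S, G.Adj p y) → t₁ ≠ t₂) := by
  by_cases hboth : (∃ p ∈ S, G.Adj p x) ∧ (∃ p ∈ S, G.Adj p y)
  · obtain ⟨⟨p, hp, hpx⟩, r, hr, hry⟩ := hboth
    exact ⟨p, hp, r, hr, x, y, Or.inl rfl, Or.inr rfl, hpx, hry, fun _ => hxy.ne,
      fun _ _ => hxy.ne⟩
  · obtain ⟨w⟩ := hconn.preconnected a x
    obtain ⟨δ, -, h₁, h₂⟩ := w.exists_boundary_dart S ha hx
    obtain ⟨s, hs, t, ht, hst, hne⟩ := exists_crossing_adj hess (e := s(δ.fst, δ.snd))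
      δ.adj S hab hxy (by grind [Sym2.eq_iff]) (by grind [Sym2.eq_iff]) ha hx
    refine ⟨_, h₁, s, hs, δ.snd, t, (hclosed _ h₁ _ δ.adj).resolve_left h₂,
      (hclosed s hs t hst).resolve_left ht, δ.adj, hst, ?_, fun h h' => absurd ⟨h, h'⟩ hboth⟩
    rintro rfl rfl
    exact hne rfl

theorem isLinkedRegion_pair (hconn : G.Connected)
    (hess : ∀ e ∈ G.edgeSet, ∀ a b c d : V,
      (G.deleteEdges {e}).Adj a b → (G.deleteEdges {e}).Adj c d →
      (G.deleteEdges {e}).Reachable a c)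
    (hxy : G.Adj x y) {a b : V} (hab : G.Adj a b) (hx : x ∉ ({a, b} : Set V))
    (hy : y ∉ ({a, b} : Set V))
    (hclosed : ∀ s ∈ ({a, b} : Set V), ∀ t, G.Adj s t → t ∈ ({a, b} : Set V) ∨ t = x ∨ t = y) :
    IsLinkedRegion G x y {a, b} := by
  obtain ⟨s₁, hs₁, s₂, hs₂, t₁, t₂, ht₁, ht₂, h₁, h₂, hne, hboth⟩ :=
    exists_two_attachments hconn hess hxy hx hy hclosed (by simp) (by simp) hab
  have hq : ∃ q : G.Walk s₁ s₂, q.IsTrail ∧ ∀ z ∈ q.support, z ∈ ({a, b} : Set V) := by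
    by_cases h : s₁ = s₂
    · subst h
      exact ⟨Walk.nil, Walk.IsTrail.nil, by simpa using hs₁⟩
    · have hadj : G.Adj s₁ s₂ := by
        have := hab.symm
        grind
      refine ⟨hadj.toWalk, by simp [Walk.isTrail_def], ?_⟩
      simpa using ⟨hs₁, hs₂⟩
  obtain ⟨q, hq, hqS⟩ := hq
  refine IsLinkedRegion.of_attachments hx hy hclosed q hq hqS ?_ ht₁ ht₂ h₁ h₂ hne hboth
  intro p hp r hr hpr
  have := hpr.ne
  have := q.start_mem_support
  grind

theorem isLinkedRegion_triple (hconn : G.Connected)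
    (hess : ∀ e ∈ G.edgeSet, ∀ a b c d : V,
      (G.deleteEdges {e}).Adj a b → (G.deleteEdges {e}).Adj c d →
      (G.deleteEdges {e}).Reachable a c)
    (hxy : G.Adj x y) {a b c : V} (hab : G.Adj a b) (hbc : G.Adj b c) (hac : a ≠ c)
    (hac' : ¬ G.Adj a c) (hx : x ∉ ({a, b, c} : Set V)) (hy : y ∉ ({a, b, c} : Set V))
    (hclosed : ∀ s ∈ ({a, b, c} : Set V), ∀ t, G.Adj s t →
      t ∈ ({a, b, c} : Set V) ∨ t = x ∨ t = y) :
    IsLinkedRegion G x y {a, b, c} := by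
  obtain ⟨s₁, hs₁, s₂, hs₂, t₁, t₂, ht₁, ht₂, h₁, h₂, hne, hboth⟩ :
    ∃ s₁ ∈ ({a, b, c} : Set V), ∃ s₂ ∈ ({a, b, c} : Set V), ∃ t₁ t₂, (t₁ = x ∨ t₁ = y) ∧
      (t₂ = x ∨ t₂ = y) ∧ G.Adj s₁ t₁ ∧ G.Adj s₂ t₂ ∧ (s₁ = s₂ → t₁ ≠ t₂ ∧ s₁ = b) ∧
      ((∃ p ∈ ({a, b, c} : Set V), G.Adj p x) → (∃ p ∈ ({a, b, c} : Set V), G.Adj p y) →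
        t₁ ≠ t₂) := by
    obtain ⟨s₁, hs₁, s₂, hs₂, t₁, t₂, ht₁, ht₂, h₁, h₂, hne, hboth⟩ :=
      exists_two_attachments hconn hess hxy hx hy hclosed (by simp) (by simp) hab
    by_cases hs : s₁ = s₂
    swap
    · exact ⟨s₁, hs₁, s₂, hs₂, t₁, t₂, ht₁, ht₂, h₁, h₂, fun h => absurd h hs, hboth⟩
    have ht := hne hs
    by_cases hb : s₁ = b
    · exact ⟨s₁, hs₁, s₂, hs₂, t₁, t₂, ht₁, ht₂, h₁, h₂, fun _ => ⟨ht, hb⟩, hboth⟩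
    subst hs
    have other : ∃ r ∈ ({a, b, c} : Set V), r ≠ s₁ ∧ ∃ t, (t = x ∨ t = y) ∧ G.Adj r t := by
      have hxa : x ≠ a ∧ x ≠ b ∧ x ≠ c := by simpa using hx
      have hya : y ≠ a ∧ y ≠ b ∧ y ≠ c := by simpa using hy
      have hcase : s₁ = a ∨ s₁ = c := by
        have : s₁ = a ∨ s₁ = b ∨ s₁ = c := by simpa using hs₁
        tauto
      rcases hcase with rfl | rfl
      · obtain ⟨s, hs, t, ht, hst, hst'⟩ := exists_crossing_adj hess (e := s(s₁, b)) hab {b, c}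
          hbc hxy (by grind [Sym2.eq_iff]) (by grind [Sym2.eq_iff]) (by simp)
          (by simp; tauto)
        have := hclosed s (by grind) t hst
        have := hst.symm
        refine ⟨s, by grind, ?_, t, ?_, hst⟩ <;> grind [Sym2.eq_swap, hab.ne]
      · obtain ⟨s, hs, t, ht, hst, hst'⟩ := exists_crossing_adj hess (e := s(b, s₁)) hbc {a, b}
          hab hxy (by grind [Sym2.eq_iff]) (by grind [Sym2.eq_iff]) (by simp)
          (by simp; tauto)
        have := hclosed s (by grind) t hst
        have := hst.symm
        refine ⟨s, by grind, ?_, t, ?_, hst⟩ <;> grind [Sym2.eq_swap, hbc.ne]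
    obtain ⟨r, hr, hrs, t, htxy, hrt⟩ := other
    by_cases htt : t = t₁
    · subst htt
      exact ⟨r, hr, s₁, hs₂, t, t₂, ht₁, ht₂, hrt, h₂, fun h => absurd h hrs, fun _ _ => ht⟩
    · exact ⟨r, hr, s₁, hs₁, t, t₁, htxy, ht₁, hrt, h₁, fun h => absurd h hrs, fun _ _ => htt⟩
  have hq : ∃ q : G.Walk s₁ s₂, q.IsTrail ∧ (∀ z ∈ q.support, z ∈ ({a, b, c} : Set V)) ∧
      b ∈ q.support := by
    by_cases h : s₁ = s₂
    · subst h
      exact ⟨Walk.nil, Walk.IsTrail.nil, by simpa using hs₁, by simp [(hne rfl).2]⟩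
    · by_cases hadj : G.Adj s₁ s₂
      · refine ⟨hadj.toWalk, by simp [Walk.isTrail_def], ?_, ?_⟩
        · simpa using ⟨hs₁, hs₂⟩
        · simp
          grind [G.adj_comm]
      · have h₁ : G.Adj s₁ b := by grind [G.adj_comm]
        have h₂ : G.Adj b s₂ := by grind [G.adj_comm]
        refine ⟨Walk.cons h₁ (Walk.cons h₂ Walk.nil), ?_, ?_, by simp⟩
        · simp [Walk.isTrail_def, h₁.ne, h]
        · intro z hz
          simp only [Walk.support_cons, Walk.support_nil, List.mem_cons, List.not_mem_nil] at hz
          grind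
  obtain ⟨q, hq, hqS, hbq⟩ := hq
  refine IsLinkedRegion.of_attachments hx hy hclosed q hq hqS ?_ ht₁ ht₂ h₁ h₂
    (fun h => (hne h).1) hboth
  intro p hp r hr hpr
  have := hpr.ne
  have := hpr.symm
  grind

/-- If two linked regions contain all edges of `G - {x, y}`, there is a dominating closed trail
through `x` and `y`. -/
theorem exists_dominating_closed_trail_of_regions
    (hess : ∀ e ∈ G.edgeSet, ∀ a b c d : V,
      (G.deleteEdges {e}).Adj a b → (G.deleteEdges {e}).Adj c d →
      (G.deleteEdges {e}).Reachable a c)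
    (hxy : G.Adj x y) (hx' : ∃ u, u ≠ y ∧ G.Adj x u) (hy' : ∃ u, u ≠ x ∧ G.Adj y u)
    {A B : Set V} (hA : IsLinkedRegion G x y A) (hB : IsLinkedRegion G x y B)
    (hd : Disjoint A B)
    (hcover : ∀ p q, G.Adj p q → p = x ∨ p = y ∨ q = x ∨ q = y ∨ p ∈ A ∨ p ∈ B) :
    ∃ (t0 : V) (t : G.Walk t0 t0), t.IsTrail ∧
      (∀ e ∈ G.edgeSet, ∃ z : V, z ∈ e ∧ z ∈ t.support) ∧
      x ∈ t.support ∧ y ∈ t.support := by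
  suffices h : ∃ U, HasSpanningLink G x y U ∧ A ⊆ U ∧ B ⊆ U by
    obtain ⟨U, hU, hAU, hBU⟩ := h
    refine hU.exists_dominating_closed_trail hxy fun p q hpq => ?_
    have hmem : ∀ z, z ∈ A ∨ z ∈ B → z ∈ U := fun z hz => hz.elim (@hAU z) (@hBU z)
    have h₁ := hcover p q hpq
    have h₂ := hcover q p hpq.symm
    have := hmem p
    have := hmem q
    grind
  by_cases hA2 : (∃ p ∈ A, G.Adj p x) ∧ (∃ p ∈ A, G.Adj p y)
  · exact ⟨A ∪ B, (hA.hasSpanningLink hA2.1 hA2.2).union hB hd, Set.subset_union_left,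
      Set.subset_union_right⟩
  by_cases hB2 : (∃ p ∈ B, G.Adj p x) ∧ (∃ p ∈ B, G.Adj p y)
  · exact ⟨B ∪ A, (hB.hasSpanningLink hB2.1 hB2.2).union hA hd.symm, Set.subset_union_right,
      Set.subset_union_left⟩
  have hu : ∃ u, G.Adj u x ∧ G.Adj u y ∧ u ∉ A ∧ u ∉ B := by
    obtain ⟨u, huy, hxu⟩ := hx'
    obtain ⟨v, hvx, hyv⟩ := hy'
    obtain ⟨s, hs, t, ht, hst, hne⟩ := exists_crossing_adj hess (e := s(x, y)) hxy
      {v | v ≠ y ∧ (v = x ∨ G.Adj v x ∨ (v ∈ A ∧ ∃ p ∈ A, G.Adj p x) ∨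
        (v ∈ B ∧ ∃ p ∈ B, G.Adj p x))} hxu hyv (by simp [huy, hxy.ne])
      (by simp [hvx, hxy.ne']) ⟨hxy.ne, Or.inl rfl⟩ (by simp)
    obtain ⟨hsy, hs⟩ := hs
    have hsx : s ≠ x := by
      rintro rfl
      by_cases hty : t = y
      · exact hne (by rw [hty])
      · exact ht ⟨hty, Or.inr (Or.inl hst.symm)⟩
    replace hs := hs.resolve_left hsx
    by_cases hty : t = y
    · subst hty
      have h1 : s ∉ A := fun h => hA2 ⟨by grind, s, h, hst⟩
      have h2 : s ∉ B := fun h => hB2 ⟨by grind, s, h, hst⟩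
      exact ⟨s, by tauto, hst, h1, h2⟩
    · exfalso
      have htx : t ≠ x := by
        rintro rfl
        exact ht ⟨hty, Or.inl rfl⟩
      apply ht
      refine ⟨hty, ?_⟩
      have h1 := hA.closed s
      have h2 := hB.closed s
      have h3 := hcover s t hst
      have h4 : s ∈ A → s ∉ B := fun h => Set.disjoint_left.mp hd h
      grind
  obtain ⟨u, hux, huy, huA, huB⟩ := hu
  have hreg : IsLinkedRegion G x y {u} := by
    refine isLinkedRegion_singleton hxy.ne hux huy fun t ht => ?_
    have := hcover u t ht
    have := hux.ne
    have := huy.ne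
    tauto
  refine ⟨{u} ∪ A ∪ B, ((hreg.hasSpanningLink ⟨u, rfl, hux⟩ ⟨u, rfl, huy⟩).union hA ?_).union
    hB ?_, fun z hz => Or.inl (Or.inr hz), fun z hz => Or.inr hz⟩
  · simpa using huA
  · rw [Set.disjoint_union_left]
    exact ⟨by simpa using huB, hd⟩

theorem exists_adj_ne_of_two_le_ncard {u : V} (v : V) (h : 2 ≤ (G.neighborSet u).ncard) :
    ∃ w, w ≠ v ∧ G.Adj u w := by
  obtain ⟨w, hw, hne⟩ := Set.exists_ne_of_one_lt_ncard (s := G.neighborSet u) (by omega) v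
  exact ⟨w, hne, hw⟩

end

theorem stmt_14 {V : Type*} [Fintype V] (G : SimpleGraph V)
    (hconn : G.Connected)
    (hess : ∀ e ∈ G.edgeSet, ∀ a b c d : V,
      (G.deleteEdges {e}).Adj a b → (G.deleteEdges {e}).Adj c d →
      (G.deleteEdges {e}).Reachable a c)
    (x y : V) (hxy : G.Adj x y)
    (hdx : 2 ≤ (G.neighborSet x).ncard) (hdy : 2 ≤ (G.neighborSet y).ncard)
    (hrem : {e ∈ G.edgeSet | x ∉ e ∧ y ∉ e}.ncard ≤ 2) :
    ∃ (t0 : V) (t : G.Walk t0 t0), t.IsTrail ∧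
      (∀ e ∈ G.edgeSet, ∃ z : V, z ∈ e ∧ z ∈ t.support) ∧
      x ∈ t.support ∧ y ∈ t.support := by
  have hx' := exists_adj_ne_of_two_le_ncard y hdx
  have hy' := exists_adj_ne_of_two_le_ncard x hdy
  have main : ∀ {A B : Set V}, IsLinkedRegion G x y A → IsLinkedRegion G x y B →
      Disjoint A B → _ → _ := fun {A B} hA hB hd hcover =>
    exists_dominating_closed_trail_of_regions hess hxy hx' hy' hA hB hd hcover
  set F : Set (Sym2 V) := {e ∈ G.edgeSet | x ∉ e ∧ y ∉ e} with hF
  have memF : ∀ p q, s(p, q) ∈ F ↔ G.Adj p q ∧ p ≠ x ∧ p ≠ y ∧ q ≠ x ∧ q ≠ y := by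
    intro p q
    simp only [hF, Set.mem_ofPred_eq, mem_edgeSet, Sym2.mem_iff]
    grind
  rcases F.eq_empty_or_nonempty with h0 | ⟨f, hf⟩
  · refine main isLinkedRegion_empty isLinkedRegion_empty (by simp) fun p q hpq => ?_
    have := memF p q
    rw [h0] at this
    grind
  induction f with | _ a b
  obtain ⟨hab, hax, hay, hbx, hby⟩ := (memF a b).1 hf
  by_cases h1 : ∃ g ∈ F, g ≠ s(a, b)
  swap
  · push Not at h1
    have hadj : ∀ p q, G.Adj p q → p = x ∨ p = y ∨ q = x ∨ q = y ∨ s(p, q) = s(a, b) := by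
      intro p q hpq
      have := memF p q
      have := h1 s(p, q)
      tauto
    simp only [Sym2.eq_iff] at hadj
    refine main (isLinkedRegion_pair hconn hess hxy hab (by grind) (by grind) ?_)
      isLinkedRegion_empty (by simp) ?_
    · intro s hs t hst
      have := hadj s t hst
      grind
    · intro p q hpq
      have := hadj p q hpq
      grind
  obtain ⟨g, hg, hgf⟩ := h1
  have hFeq : ∀ e ∈ F, e = s(a, b) ∨ e = g := by
    have hsub : {s(a, b), g} ⊆ F := by grind
    have := Set.eq_of_subset_of_ncard_le hsub (by rw [Set.ncard_pair hgf.symm]; exact hrem)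
      F.toFinite
    intro e he
    rw [← this] at he
    simpa using he
  induction g with | _ c d
  obtain ⟨hcd, hcx, hcy, hdx, hdy⟩ := (memF c d).1 hg
  have hadj : ∀ p q, G.Adj p q → p = x ∨ p = y ∨ q = x ∨ q = y ∨ s(p, q) = s(a, b) ∨
      s(p, q) = s(c, d) := by
    intro p q hpq
    have := memF p q
    have := hFeq s(p, q)
    tauto
  have triple : ∀ p q r, G.Adj p q → G.Adj q r → p ≠ r →
      (∀ z, z = p ∨ z = q ∨ z = r → z ≠ x ∧ z ≠ y) →
      (∀ u v, G.Adj u v → u = x ∨ u = y ∨ v = x ∨ v = y ∨ s(u, v) = s(p, q) ∨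
        s(u, v) = s(q, r)) →
      ∃ (t0 : V) (t : G.Walk t0 t0), t.IsTrail ∧
      (∀ e ∈ G.edgeSet, ∃ z : V, z ∈ e ∧ z ∈ t.support) ∧
      x ∈ t.support ∧ y ∈ t.support := by
    intro p q r hpq hqr hpr hz hadj
    simp only [Sym2.eq_iff] at hadj
    have := hpq.ne
    have := hqr.ne
    refine main (isLinkedRegion_triple hconn hess hxy hpq hqr hpr ?_ ?_ ?_ ?_)
      isLinkedRegion_empty (by simp) ?_
    · intro h
      have := hadj p r h
      grind
    · grind
    · grind
    · intro s hs t hst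
      have := hadj s t hst
      grind
    · intro u v huv
      have := hadj u v huv
      grind
  have hgf' := hgf
  rw [ne_eq, Sym2.eq_iff] at hgf'
  by_cases hac : a = c
  · subst hac
    exact triple b a d hab.symm hcd (by grind) (by grind) (by grind [Sym2.eq_swap])
  by_cases had : a = d
  · subst had
    exact triple b a c hab.symm hcd.symm (by grind) (by grind) (by grind [Sym2.eq_swap])
  by_cases hbc : b = c
  · subst hbc
    exact triple a b d hab hcd (by grind) (by grind) (by grind [Sym2.eq_swap])
  by_cases hbd : b = d
  · subst hbd
    exact triple a b c hab hcd.symm (by grind) (by grind) (by grind [Sym2.eq_swap])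
  simp only [Sym2.eq_iff] at hadj
  refine main (isLinkedRegion_pair hconn hess hxy hab (by grind) (by grind) ?_)
    (isLinkedRegion_pair hconn hess hxy hcd (by grind) (by grind) ?_) ?_ ?_
  · intro s hs t hst
    have := hadj s t hst
    grind
  · intro s hs t hst
    have := hadj s t hst
    grind
  · rw [Set.disjoint_left]
    grind
  · intro p q hpq
    have := hadj p q hpq
    grind
end
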